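/- arXiv:1912.03956 — 5 statements merged into one kernel-verified Lean document; each statement's English description precedes it below -/
import Mathlib

section
/- Let φ(z) = (az + b)/(cz + d) be a linear fractional map with a, b, c, d ∈ ℂ and ad − bc ≠ 0. Then φ maps the open unit disc 𝔻 into itself if and only if |b·conj(d) − a·conj(c)| + |ad − bc| ≤ |d|² − |c|². -/
open ComplexConjugate in
/-- The defect identity behind the fact that `z ↦ (conj d * z + conj c) / (c * z + d)` maps the unit
circle to itself. -/
theorem Complex.norm_sq_mul_add_sub_norm_sq_conj (c d z : ℂ) :
    ‖c * z + d‖ ^ 2 - ‖conj d * z + conj c‖ ^ 2 = (‖d‖ ^ 2 - ‖c‖ ^ 2) * (1 - ‖z‖ ^ 2) := by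
  simp only [Complex.sq_norm, Complex.normSq_apply, Complex.add_re, Complex.add_im, Complex.mul_re,
    Complex.mul_im, Complex.conj_re, Complex.conj_im]
  ring

open ComplexConjugate in
/-- The identity exhibiting the centre and the radius of the image of the unit disc under
`z ↦ (a * z + b) / (c * z + d)`. -/
theorem Complex.linearFractional_center_identity (a b c d z : ℂ) :
    ((‖d‖ ^ 2 - ‖c‖ ^ 2 : ℝ) : ℂ) * (a * z + b) =
      (b * conj d - a * conj c) * (c * z + d) + (a * d - b * c) * (conj d * z + conj c) := by
  push_cast
  rw [← Complex.mul_conj', ← Complex.mul_conj']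
  ring

/-- The numerator is dominated by the denominator on the closed disc, poles included. -/
theorem Complex.norm_mul_add_le_of_norm_div_lt_one {a b c d : ℂ} (h_det : a * d - b * c ≠ 0)
    (h : ∀ z : ℂ, ‖z‖ < 1 → ‖(a * z + b) / (c * z + d)‖ < 1) {z : ℂ} (hz : ‖z‖ ≤ 1) :
    ‖a * z + b‖ ≤ ‖c * z + d‖ := by
  have h_subset : Metric.ball (0 : ℂ) 1 ∩ {-d / c}ᶜ ⊆ {z | ‖a * z + b‖ ≤ ‖c * z + d‖} := by
    rintro w ⟨hw, hwp⟩
    have hden : c * w + d ≠ 0 := by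
      intro h0
      have hc : c ≠ 0 := by
        rintro rfl
        apply h_det
        simp_all
      apply hwp
      rw [Set.mem_singleton_iff, eq_div_iff hc]
      linear_combination h0
    have := h w (by simpa using hw)
    rw [norm_div, div_lt_one (norm_pos_iff.2 hden)] at this
    exact this.le
  have h_closed : IsClosed {z : ℂ | ‖a * z + b‖ ≤ ‖c * z + d‖} :=
    isClosed_le (by fun_prop) (by fun_prop)
  have h_ball : Metric.ball (0 : ℂ) 1 ⊆ {z | ‖a * z + b‖ ≤ ‖c * z + d‖} :=
    ((dense_compl_singleton (-d / c)).open_subset_closure_inter Metric.isOpen_ball).trans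
      (closure_minimal h_subset h_closed)
  have := closure_minimal h_ball h_closed
  rw [closure_ball _ one_ne_zero] at this
  exact this (by simpa using hz)

/-- A complex number can be rotated so that the triangle inequality becomes an equality. -/
theorem Complex.exists_norm_eq_one_norm_add_mul_eq (m : ℂ) {e : ℂ} (he : e ≠ 0) :
    ∃ w : ℂ, ‖w‖ = 1 ∧ ‖m + e * w‖ = ‖m‖ + ‖e‖ := by
  have he' : ‖e‖ ≠ 0 := norm_ne_zero_iff.2 he
  by_cases hm : m = 0
  · exact ⟨1, by simp [hm]⟩
  have hm' : ‖m‖ ≠ 0 := norm_ne_zero_iff.2 hm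
  have hmC : (‖m‖ : ℂ) ≠ 0 := by exact_mod_cast hm'
  refine ⟨‖e‖ * m / (‖m‖ * e), by simp [he', hm', mul_comm], ?_⟩
  have h_eq : m + e * (‖e‖ * m / (‖m‖ * e)) = ((‖m‖ + ‖e‖ : ℝ) : ℂ) * (m / ‖m‖) := by
    push_cast
    field_simp
  rw [h_eq, norm_mul, Complex.norm_of_nonneg (by positivity)]
  simp [hm']

open ComplexConjugate in
/-- If `‖c‖ < ‖d‖`, every point of the unit circle is attained on the unit circle by
`z ↦ (conj d * z + conj c) / (c * z + d)`. -/
theorem Complex.exists_norm_eq_one_conj_mul_add_eq {c d w : ℂ} (hcd : ‖c‖ < ‖d‖) (hw : ‖w‖ = 1) :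
    ∃ z : ℂ, ‖z‖ = 1 ∧ conj d * z + conj c = w * (c * z + d) := by
  have hden : conj d - w * c ≠ 0 := by
    intro h0
    have := congrArg norm (sub_eq_zero.1 h0)
    rw [norm_mul, hw, RCLike.norm_conj, one_mul] at this
    exact hcd.ne' this
  have h_norm : ‖w * d - conj c‖ = ‖conj d - w * c‖ := by
    have h := Complex.norm_sq_mul_add_sub_norm_sq_conj (-c) (conj d) w
    rw [hw] at h
    simp only [map_neg, Complex.conj_conj] at h
    rw [show w * d - conj c = d * w + -conj c by ring,
      show conj d - w * c = -c * w + conj d by ring,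
      ← sq_eq_sq₀ (norm_nonneg _) (norm_nonneg _)]
    linarith
  refine ⟨(w * d - conj c) / (conj d - w * c), ?_, ?_⟩
  · rw [norm_div, h_norm, div_self (norm_ne_zero_iff.2 hden)]
  · field_simp
    ring

/-- A linear fractional map `φ(z) = (az+b)/(cz+d)` with `ad - bc ≠ 0`
maps the open unit disc into itself if and only if
`|b * conj d - a * conj c| + |ad - bc| ≤ |d|^2 - |c|^2`. -/
theorem stmt_10 (a b c d : ℂ) (h_det : a * d - b * c ≠ 0) :
    (∀ z : ℂ, ‖z‖ < 1 → ‖(a * z + b) / (c * z + d)‖ < 1) ↔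
      ‖b * (starRingEnd ℂ) d - a * (starRingEnd ℂ) c‖ + ‖a * d - b * c‖ ≤
        ‖d‖ ^ 2 - ‖c‖ ^ 2 := by
  constructor
  · intro h
    have h_le {z : ℂ} (hz : ‖z‖ ≤ 1) : ‖a * z + b‖ ≤ ‖c * z + d‖ :=
      Complex.norm_mul_add_le_of_norm_div_lt_one h_det h hz
    have h_den {z : ℂ} (hz : ‖z‖ ≤ 1) : c * z + d ≠ 0 := by
      intro h0
      have h1 : a * z + b = 0 := by simpa [h0] using h_le hz
      exact h_det (by linear_combination a * h0 - c * h1)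
    have hcd : ‖c‖ < ‖d‖ := by
      by_contra! hdc
      have hc : c ≠ 0 := by
        rintro rfl
        have hd : d = 0 := by simpa using hdc
        simp [hd] at h_det
      refine h_den (z := -d / c) ?_ (by field_simp; ring)
      rw [norm_div, norm_neg]
      exact div_le_one_of_le₀ hdc (norm_nonneg _)
    have hD : 0 < ‖d‖ ^ 2 - ‖c‖ ^ 2 := sub_pos.2 (by gcongr)
    obtain ⟨w, hw, hw_add⟩ := Complex.exists_norm_eq_one_norm_add_mul_eq
      (b * (starRingEnd ℂ) d - a * (starRingEnd ℂ) c) h_det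
    obtain ⟨z, hz, hzw⟩ := Complex.exists_norm_eq_one_conj_mul_add_eq hcd hw
    have key := Complex.linearFractional_center_identity a b c d z
    rw [hzw, ← mul_assoc, ← add_mul] at key
    have key_norm := congrArg norm key
    rw [norm_mul, norm_mul, hw_add, Complex.norm_of_nonneg hD.le] at key_norm
    refine le_of_mul_le_mul_right ?_ (norm_pos_iff.2 (h_den hz.le))
    rw [← key_norm]
    exact mul_le_mul_of_nonneg_left (h_le hz.le) hD.le
  · intro h z hz
    have hdet_pos : 0 < ‖a * d - b * c‖ := norm_pos_iff.2 h_det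
    have hD : 0 < ‖d‖ ^ 2 - ‖c‖ ^ 2 :=
      (add_pos_of_nonneg_of_pos (norm_nonneg _) hdet_pos).trans_le h
    have hz_sq : 0 < 1 - ‖z‖ ^ 2 := by nlinarith [norm_nonneg z]
    have h_lt : ‖(starRingEnd ℂ) d * z + (starRingEnd ℂ) c‖ < ‖c * z + d‖ := by
      refine lt_of_pow_lt_pow_left₀ 2 (norm_nonneg _) ?_
      have := Complex.norm_sq_mul_add_sub_norm_sq_conj c d z
      linarith [mul_pos hD hz_sq]
    rw [norm_div, div_lt_one ((norm_nonneg _).trans_lt h_lt)]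
    refine lt_of_mul_lt_mul_left ?_ hD.le
    calc (‖d‖ ^ 2 - ‖c‖ ^ 2) * ‖a * z + b‖
        = ‖((‖d‖ ^ 2 - ‖c‖ ^ 2 : ℝ) : ℂ) * (a * z + b)‖ := by
          rw [norm_mul, Complex.norm_of_nonneg hD.le]
      _ ≤ ‖b * (starRingEnd ℂ) d - a * (starRingEnd ℂ) c‖ * ‖c * z + d‖ +
          ‖a * d - b * c‖ * ‖(starRingEnd ℂ) d * z + (starRingEnd ℂ) c‖ := by
          rw [Complex.linearFractional_center_identity, ← norm_mul, ← norm_mul]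
          exact norm_add_le _ _
      _ < ‖b * (starRingEnd ℂ) d - a * (starRingEnd ℂ) c‖ * ‖c * z + d‖ +
          ‖a * d - b * c‖ * ‖c * z + d‖ := by gcongr
      _ ≤ (‖d‖ ^ 2 - ‖c‖ ^ 2) * ‖c * z + d‖ := by
          rw [← add_mul]
          gcongr
end

section
/- Let φ(z) = (az + b)/(cz + d) be a linear fractional map with ad − bc = 1 that maps the open unit disc 𝔻 into itself. Then σ(z) = (conj(a)·z − conj(c)) / (−conj(b)·z + conj(d)) also maps 𝔻 into itself. -/
/-- If `z ↦ (az+b)/(cz+d)` is bounded by one on the open unit disc (division by zero being zero),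
then `‖az+b‖ ≤ ‖cz+d‖` on the closed unit disc: the poles are removed by density. -/
theorem norm_num_le_norm_den_of_maps_disc {a b c d : ℂ} (h_det : a * d - b * c = 1)
    (hφ : ∀ z : ℂ, ‖z‖ < 1 → ‖(a * z + b) / (c * z + d)‖ < 1) {z : ℂ} (hz : ‖z‖ ≤ 1) :
    ‖a * z + b‖ ≤ ‖c * z + d‖ := by
  have hclosed : IsClosed {w : ℂ | ‖a * w + b‖ ≤ ‖c * w + d‖} :=
    isClosed_le (by fun_prop) (by fun_prop)
  have hsub : Metric.ball (0 : ℂ) 1 ∩ {-d / c}ᶜ ⊆ {w : ℂ | ‖a * w + b‖ ≤ ‖c * w + d‖} := by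
    rintro w ⟨hw, hne⟩
    have hden : c * w + d ≠ 0 := by
      intro h0
      by_cases hc : c = 0
      · have hd : d = 0 := by simpa [hc] using h0
        simp [hc, hd] at h_det
      · refine hne ?_
        rw [Set.mem_singleton_iff, eq_div_iff hc]
        linear_combination h0
    have h := hφ w (by simpa using hw)
    rw [norm_div, div_lt_one (norm_pos_iff.mpr hden)] at h
    exact h.le
  have hball : Metric.ball (0 : ℂ) 1 ⊆ closure (Metric.ball (0 : ℂ) 1 ∩ {-d / c}ᶜ) :=
    (dense_compl_singleton (-d / c)).open_subset_closure_inter Metric.isOpen_ball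
  have hmem : z ∈ closure (Metric.ball (0 : ℂ) 1) := by
    rw [closure_ball (0 : ℂ) one_ne_zero]
    simpa using hz
  exact closure_minimal (hball.trans (closure_minimal hsub hclosed)) hclosed hmem

/-- If `φ(z) = (az+b)/(cz+d)` with `ad - bc = 1` maps the open unit disc
into itself, then `σ(z) = (conj a · z - conj c)/(-conj b · z + conj d)` also maps the open
unit disc into itself. -/
theorem stmt_12 (a b c d : ℂ) (h_det : a * d - b * c = 1)
    (hφ : ∀ z : ℂ, ‖z‖ < 1 → ‖(a * z + b) / (c * z + d)‖ < 1) :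
    ∀ z : ℂ, ‖z‖ < 1 →
      ‖((starRingEnd ℂ) a * z - (starRingEnd ℂ) c) /
          (-(starRingEnd ℂ) b * z + (starRingEnd ℂ) d)‖ < 1 := by
  intro z hz
  obtain ⟨u, rfl⟩ : ∃ u, (starRingEnd ℂ) u = z := ⟨(starRingEnd ℂ) z, by simp⟩
  rw [RCLike.norm_conj] at hz
  simp only [← map_mul, ← map_sub, ← map_neg, ← map_add, ← map_div₀, RCLike.norm_conj]
  by_contra! hcon
  have hnum : a * u - c ≠ 0 := by
    intro h0
    norm_num [h0] at hcon
  have hden : -b * u + d ≠ 0 := by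
    intro h0
    rw [h0, div_zero, norm_zero] at hcon
    exact absurd hcon (by norm_num)
  rw [norm_div, one_le_div (norm_pos_iff.mpr hden)] at hcon
  -- The root `w` of `(a w + b) u = c w + d` lies in the closed disc.
  obtain ⟨w, hw⟩ : ∃ w, w = (-b * u + d) / (a * u - c) := ⟨_, rfl⟩
  have hw1 : ‖w‖ ≤ 1 := by
    rw [hw, norm_div]
    exact div_le_one_of_le₀ hcon (norm_nonneg _)
  have hroot : c * w + d = (a * w + b) * u := by
    rw [eq_div_iff hnum] at hw
    linear_combination -hw
  have hle := norm_num_le_norm_den_of_maps_disc h_det hφ hw1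
  rw [hroot, norm_mul] at hle
  have h0 : a * w + b = 0 := by
    rw [← norm_eq_zero]
    nlinarith [norm_nonneg (a * w + b)]
  have h1 : c * w + d = 0 := by rw [hroot, h0, zero_mul]
  exact one_ne_zero (h_det.symm.trans (by linear_combination a * h1 - c * h0))
end

section
/- Let φ(z) = (az + b)/(cz + d) be a linear fractional map with ad − bc ≠ 0 that maps the open unit disc 𝔻 into itself. Set σ(z) = (conj(a)·z − conj(c)) / (−conj(b)·z + conj(d)), g(z) = (−conj(b)·z + conj(d))^{−1}, and h(z) = cz + d. Then σ maps 𝔻 into itself, g and h are bounded analytic functions on 𝔻, and on the Hardy space H² the adjoint of the composition operator C_φ satisfies C_φ* = M_g C_σ M_h*, where M_g and M_h denote the multiplication operators f ↦ g·f and f ↦ h·f. -/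
open Complex
open scoped ComplexInnerProductSpace

section LinearFractional

variable {a b c d : ℂ}

theorem norm_num_le_norm_denom_of_mapsTo_disc
    (hφ : ∀ z : ℂ, ‖z‖ < 1 → ‖(a * z + b) / (c * z + d)‖ < 1) (h_det : a * d - b * c ≠ 0)
    {z : ℂ} (hz : ‖z‖ ≤ 1) : ‖a * z + b‖ ≤ ‖c * z + d‖ := by
  have hcd : c ≠ 0 ∨ d ≠ 0 := by
    by_contra! h
    simp [h.1, h.2] at h_det
  have hlt : ∀ w : ℂ, ‖w‖ < 1 → c * w + d ≠ 0 → ‖a * w + b‖ ≤ ‖c * w + d‖ := by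
    intro w hw hne
    have h := hφ w hw
    rw [norm_div, div_lt_one (norm_pos_iff.2 hne)] at h
    exact h.le
  have hdense : Dense {w : ℂ | c * w + d ≠ 0} := by
    refine (dense_compl_singleton (-d / c)).mono ?_
    refine fun w hw h0 => hw ?_
    have hc : c ≠ 0 := by
      rintro rfl
      simp_all
    rw [Set.mem_singleton_iff, eq_div_iff hc]
    linear_combination h0
  have hmem : z ∈ closure (Metric.ball (0 : ℂ) 1 ∩ {w : ℂ | c * w + d ≠ 0}) := by
    refine closure_minimal (hdense.open_subset_closure_inter Metric.isOpen_ball)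
      isClosed_closure ?_
    rw [closure_ball _ one_ne_zero]
    simpa using hz
  have hclosed : IsClosed {w : ℂ | ‖a * w + b‖ ≤ ‖c * w + d‖} :=
    isClosed_le (by fun_prop) (by fun_prop)
  exact closure_minimal (fun w hw => hlt w (by simpa using hw.1) hw.2) hclosed hmem

theorem denom_ne_zero_of_mapsTo_disc
    (hφ : ∀ z : ℂ, ‖z‖ < 1 → ‖(a * z + b) / (c * z + d)‖ < 1) (h_det : a * d - b * c ≠ 0)
    {z : ℂ} (hz : ‖z‖ ≤ 1) : c * z + d ≠ 0 := by
  intro h0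
  have h := norm_num_le_norm_denom_of_mapsTo_disc hφ h_det hz
  rw [h0, norm_zero, norm_le_zero_iff] at h
  exact h_det (by linear_combination a * h0 - c * h)

theorem norm_conj_num_lt_of_mapsTo_disc
    (hφ : ∀ z : ℂ, ‖z‖ < 1 → ‖(a * z + b) / (c * z + d)‖ < 1) (h_det : a * d - b * c ≠ 0)
    {w : ℂ} (hw : ‖w‖ < 1) : ‖a * w - c‖ < ‖-b * w + d‖ := by
  have hne : ∀ ζ : ℂ, ‖ζ‖ ≤ 1 → (a * w - c) * ζ ≠ -b * w + d := by
    intro ζ hζ h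
    have hd := denom_ne_zero_of_mapsTo_disc hφ h_det hζ
    have h1 : w * (a * ζ + b) = c * ζ + d := by linear_combination h
    have h2 := norm_num_le_norm_denom_of_mapsTo_disc hφ h_det hζ
    rw [← h1, norm_mul] at h2
    have h3 : 0 < ‖c * ζ + d‖ := norm_pos_iff.2 hd
    rw [← h1, norm_mul] at h3
    have h4 : 0 < ‖a * ζ + b‖ := pos_of_mul_pos_right h3 (norm_nonneg _)
    nlinarith
  by_contra! hle
  by_cases h0 : a * w - c = 0
  · rw [h0, norm_zero, norm_le_zero_iff] at hle
    exact hne 0 (by simp) (by rw [hle, mul_zero])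
  · refine hne ((-b * w + d) / (a * w - c)) ?_ (mul_div_cancel₀ _ h0)
    rw [norm_div]
    exact div_le_one_of_le₀ hle (norm_nonneg _)

end LinearFractional

section SzegoKernel

variable {H : Type*} [NormedAddCommGroup H] [InnerProductSpace ℂ H]

theorem eq_of_inner_basis_eq (e : HilbertBasis ℕ ℂ H) {x y : H}
    (h : ∀ k, ⟪x, e k⟫ = ⟪y, e k⟫) : x = y := by
  refine e.repr.injective (lp.ext (funext fun k => ?_))
  rw [e.repr_apply_apply, e.repr_apply_apply, ← inner_conj_symm, h, inner_conj_symm]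

/-- The reproducing kernel at `z` of the Hardy space with Hilbert basis `e k ↔ z ^ k`. -/
noncomputable def szegoKernel (e : HilbertBasis ℕ ℂ H) (z : ℂ) : H :=
  ∑' k, (starRingEnd ℂ z) ^ k • e k

variable [CompleteSpace H] (e : HilbertBasis ℕ ℂ H) {z w : ℂ}

theorem hasSum_szegoKernel (hz : ‖z‖ < 1) :
    HasSum (fun k => (starRingEnd ℂ z) ^ k • e k) (szegoKernel e z) := by
  refine Summable.hasSum (Summable.of_norm ?_)
  simpa [norm_smul, e.orthonormal.1] using hz

theorem inner_basis_szegoKernel (hz : ‖z‖ < 1) (k : ℕ) :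
    ⟪e k, szegoKernel e z⟫ = (starRingEnd ℂ z) ^ k := by
  have h := (hasSum_szegoKernel e hz).mapL (innerSL ℂ (e k))
  refine h.unique ?_
  convert hasSum_single k ?_ using 1
  · simp [e.orthonormal.1]
  · intro j hj
    simp [e.orthonormal.2 hj.symm]

theorem inner_szegoKernel_basis (hz : ‖z‖ < 1) (k : ℕ) : ⟪szegoKernel e z, e k⟫ = z ^ k := by
  rw [← inner_conj_symm, inner_basis_szegoKernel e hz, map_pow, conj_conj]

theorem hasSum_inner_szegoKernel (hz : ‖z‖ < 1) (x : H) :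
    HasSum (fun k => z ^ k * ⟪e k, x⟫) ⟪szegoKernel e z, x⟫ := by
  simpa only [inner_szegoKernel_basis e hz] using e.hasSum_inner_mul_inner (szegoKernel e z) x

theorem inner_szegoKernel_szegoKernel (hz : ‖z‖ < 1) (hw : ‖w‖ < 1) :
    ⟪szegoKernel e z, szegoKernel e w⟫ = (1 - z * starRingEnd ℂ w)⁻¹ := by
  refine (hasSum_inner_szegoKernel e hz _).unique ?_
  simp only [inner_basis_szegoKernel e hw, ← mul_pow]
  refine hasSum_geometric_of_norm_lt_one ?_
  rw [norm_mul, RCLike.norm_conj]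
  exact mul_lt_one_of_nonneg_of_lt_one_left (norm_nonneg _) hz hw.le

theorem eq_zero_of_inner_szegoKernel_eq_zero {x : H}
    (h : ∀ z : ℂ, ‖z‖ < 1 → ⟪szegoKernel e z, x⟫ = 0) : x = 0 := by
  let p : FormalMultilinearSeries ℂ ℂ ℂ := .ofScalars ℂ fun k => ⟪e k, x⟫
  have hp : HasFPowerSeriesAt (0 : ℂ → ℂ) p 0 := by
    rw [hasFPowerSeriesAt_iff]
    filter_upwards [Metric.ball_mem_nhds (0 : ℂ) one_pos] with z hz
    have hz' : ‖z‖ < 1 := by simpa using hz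
    simpa [p, FormalMultilinearSeries.coeff_ofScalars, h z hz'] using
      hasSum_inner_szegoKernel e hz' x
  refine eq_of_inner_basis_eq e fun k => ?_
  have hk : p.coeff k = 0 := by rw [hp.eq_zero]; rfl
  rw [FormalMultilinearSeries.coeff_ofScalars] at hk
  rw [← inner_conj_symm, hk]
  simp

theorem eq_of_inner_szegoKernel_eq {S T : H →L[ℂ] H}
    (h : ∀ z w : ℂ, ‖z‖ < 1 → ‖w‖ < 1 →
      ⟪szegoKernel e z, S (szegoKernel e w)⟫ = ⟪szegoKernel e z, T (szegoKernel e w)⟫) :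
    S = T := by
  have hker : ∀ w : ℂ, ‖w‖ < 1 → (S - T) (szegoKernel e w) = 0 := fun w hw =>
    eq_zero_of_inner_szegoKernel_eq_zero e fun z hz => by
      simp [h z w hz hw]
  have hadj : ContinuousLinearMap.adjoint (S - T) = 0 := by
    ext x
    refine eq_zero_of_inner_szegoKernel_eq_zero e fun w hw => ?_
    rw [ContinuousLinearMap.adjoint_inner_right, hker w hw, inner_zero_left]
  rwa [LinearIsometryEquiv.map_eq_zero_iff, sub_eq_zero] at hadj

theorem hasSum_taylor_unitDisc {f : ℂ → ℂ} (hf : DifferentiableOn ℂ f (Metric.ball 0 1))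
    (hz : ‖z‖ < 1) :
    HasSum (fun p : ℕ => z ^ p * (iteratedDeriv p f 0 / (p.factorial : ℂ))) (f z) := by
  have hz' : z ∈ Metric.ball (0 : ℂ) 1 := by simpa using hz
  refine (Complex.hasSum_taylorSeries_on_ball hf hz').congr_fun fun p => ?_
  simp only [sub_zero, smul_eq_mul]
  ring

/-- The adjoint of a composition operator sends the kernel at `z` to the kernel at `φ z`. -/
theorem adjoint_composition_szegoKernel {φ : ℂ → ℂ} {C : H →L[ℂ] H}
    (hd : DifferentiableOn ℂ φ (Metric.ball 0 1)) (hφ : ∀ z : ℂ, ‖z‖ < 1 → ‖φ z‖ < 1)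
    (hC : ∀ k p : ℕ, ⟪e p, C (e k)⟫ =
      iteratedDeriv p (fun z => φ z ^ k) 0 / (p.factorial : ℂ))
    (hz : ‖z‖ < 1) :
    ContinuousLinearMap.adjoint C (szegoKernel e z) = szegoKernel e (φ z) := by
  refine eq_of_inner_basis_eq e fun k => ?_
  rw [ContinuousLinearMap.adjoint_inner_left, inner_szegoKernel_basis e (hφ z hz)]
  refine (hasSum_inner_szegoKernel e hz _).unique ?_
  simp only [hC]
  exact hasSum_taylor_unitDisc (hd.pow k) hz

/-- Kernels are eigenvectors of adjoints of multiplication operators. -/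
theorem adjoint_multiplication_szegoKernel {u : ℂ → ℂ} {M : H →L[ℂ] H}
    (hd : DifferentiableOn ℂ u (Metric.ball 0 1))
    (hM : ∀ k p : ℕ, ⟪e p, M (e k)⟫ =
      if k ≤ p then iteratedDeriv (p - k) u 0 / ((p - k).factorial : ℂ) else 0)
    (hz : ‖z‖ < 1) :
    ContinuousLinearMap.adjoint M (szegoKernel e z) =
      starRingEnd ℂ (u z) • szegoKernel e z := by
  refine eq_of_inner_basis_eq e fun k => ?_
  rw [ContinuousLinearMap.adjoint_inner_left, inner_smul_left, conj_conj,
    inner_szegoKernel_basis e hz]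
  refine (hasSum_inner_szegoKernel e hz _).unique ?_
  rw [← hasSum_nat_add_iff' k, Finset.sum_eq_zero, sub_zero]
  · rw [mul_comm]
    refine ((hasSum_taylor_unitDisc hd hz).mul_left (z ^ k)).congr_fun fun p => ?_
    rw [hM, if_pos (Nat.le_add_left k p), Nat.add_sub_cancel]
    ring
  · intro p hp
    rw [hM, if_neg (by simpa using hp), mul_zero]

end SzegoKernel

/-- **Cowen's adjoint formula on `H²`.**
Let `φ(z) = (az+b)/(cz+d)` (`ad - bc ≠ 0`) map the open unit disc into itself, and set
`σ(z) = (ā z - c̄)/(-b̄ z + d̄)`, `g(z) = (-b̄ z + d̄)⁻¹`, `h(z) = cz + d`.  The Hardy space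
`H²` is modelled as a Hilbert space `H` with Hilbert basis `e k ↔ z^k`; the composition
operators `Cφ, Cσ` and the multiplication operators `Mg, Mh` are characterized through
their matrix entries via Taylor coefficients at `0`.  Then `σ` maps the disc into itself,
`g` and `h` are bounded analytic on the disc, and `Cφ* = Mg ∘ Cσ ∘ Mh*`. -/
theorem stmt_14 (a b c d : ℂ) (h_det : a * d - b * c ≠ 0)
    (hφ : ∀ z : ℂ, ‖z‖ < 1 → ‖(a * z + b) / (c * z + d)‖ < 1)
    (H : Type) [NormedAddCommGroup H] [InnerProductSpace ℂ H] [CompleteSpace H]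
    (e : HilbertBasis ℕ ℂ H)
    (Cφ Cσ Mg Mh : H →L[ℂ] H)
    (hCφ : ∀ k p : ℕ, ⟪(e p : H), Cφ (e k)⟫ =
      iteratedDeriv p (fun z : ℂ => ((a * z + b) / (c * z + d)) ^ k) 0 / (p.factorial : ℂ))
    (hCσ : ∀ k p : ℕ, ⟪(e p : H), Cσ (e k)⟫ =
      iteratedDeriv p
        (fun z : ℂ => (((starRingEnd ℂ) a * z - (starRingEnd ℂ) c) /
          (-(starRingEnd ℂ) b * z + (starRingEnd ℂ) d)) ^ k) 0 / (p.factorial : ℂ))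
    (hMg : ∀ k p : ℕ, ⟪(e p : H), Mg (e k)⟫ =
      if k ≤ p then
        iteratedDeriv (p - k)
          (fun z : ℂ => (-(starRingEnd ℂ) b * z + (starRingEnd ℂ) d)⁻¹) 0 /
          ((p - k).factorial : ℂ)
      else 0)
    (hMh : ∀ k p : ℕ, ⟪(e p : H), Mh (e k)⟫ =
      if k ≤ p then
        iteratedDeriv (p - k) (fun z : ℂ => c * z + d) 0 / ((p - k).factorial : ℂ)
      else 0) :
    (∀ z : ℂ, ‖z‖ < 1 →
      ‖((starRingEnd ℂ) a * z - (starRingEnd ℂ) c) /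
          (-(starRingEnd ℂ) b * z + (starRingEnd ℂ) d)‖ < 1) ∧
    DifferentiableOn ℂ
      (fun z : ℂ => (-(starRingEnd ℂ) b * z + (starRingEnd ℂ) d)⁻¹)
      (Metric.ball (0 : ℂ) 1) ∧
    (∃ M : ℝ, ∀ z : ℂ, ‖z‖ < 1 →
      ‖(-(starRingEnd ℂ) b * z + (starRingEnd ℂ) d)⁻¹‖ ≤ M) ∧
    DifferentiableOn ℂ (fun z : ℂ => c * z + d) (Metric.ball (0 : ℂ) 1) ∧
    (∃ M : ℝ, ∀ z : ℂ, ‖z‖ < 1 → ‖c * z + d‖ ≤ M) ∧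
    ContinuousLinearMap.adjoint Cφ = Mg ∘L (Cσ ∘L ContinuousLinearMap.adjoint Mh) := by
  have hσlt : ∀ z : ℂ, ‖z‖ < 1 → ‖(starRingEnd ℂ) a * z - (starRingEnd ℂ) c‖ <
      ‖-(starRingEnd ℂ) b * z + (starRingEnd ℂ) d‖ := by
    intro z hz
    have h := norm_conj_num_lt_of_mapsTo_disc hφ h_det
      (w := (starRingEnd ℂ) z) (by rwa [RCLike.norm_conj])
    rw [← RCLike.norm_conj (a * _ - c), ← RCLike.norm_conj (-b * _ + d)] at h
    simpa using h
  have hσden : ∀ z : ℂ, ‖z‖ < 1 → -(starRingEnd ℂ) b * z + (starRingEnd ℂ) d ≠ 0 :=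
    fun z hz => norm_pos_iff.1 ((norm_nonneg _).trans_lt (hσlt z hz))
  have hσ : ∀ z : ℂ, ‖z‖ < 1 → ‖((starRingEnd ℂ) a * z - (starRingEnd ℂ) c) /
      (-(starRingEnd ℂ) b * z + (starRingEnd ℂ) d)‖ < 1 := by
    intro z hz
    rw [norm_div, div_lt_one (norm_pos_iff.2 (hσden z hz))]
    exact hσlt z hz
  have hφden : ∀ z : ℂ, ‖z‖ < 1 → c * z + d ≠ 0 :=
    fun z hz => denom_ne_zero_of_mapsTo_disc hφ h_det hz.le
  have hgd : DifferentiableOn ℂ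
      (fun z : ℂ => (-(starRingEnd ℂ) b * z + (starRingEnd ℂ) d)⁻¹) (Metric.ball (0 : ℂ) 1) :=
    DifferentiableOn.inv (by fun_prop) fun z hz => hσden z (by simpa using hz)
  have hhd : DifferentiableOn ℂ (fun z : ℂ => c * z + d) (Metric.ball (0 : ℂ) 1) := by fun_prop
  have hbd : ‖b‖ < ‖d‖ := by
    have hd : d ≠ 0 := by simpa using hφden 0 (by simp)
    have h := hφ 0 (by simp)
    rwa [mul_zero, mul_zero, zero_add, zero_add, norm_div, div_lt_one (norm_pos_iff.2 hd)] at h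
  refine ⟨hσ, hgd, ⟨(‖d‖ - ‖b‖)⁻¹, fun z hz => ?_⟩, hhd, ⟨‖c‖ + ‖d‖, fun z hz => ?_⟩, ?_⟩
  · rw [norm_inv]
    refine inv_anti₀ (sub_pos.2 hbd) ?_
    have h := norm_sub_norm_le ((starRingEnd ℂ) d) ((starRingEnd ℂ) b * z)
    rw [norm_mul, RCLike.norm_conj, RCLike.norm_conj] at h
    rw [neg_mul, neg_add_eq_sub]
    nlinarith [norm_nonneg b]
  · refine (norm_add_le _ _).trans ?_
    rw [norm_mul]
    nlinarith [norm_nonneg c]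
  · refine eq_of_inner_szegoKernel_eq e fun z w hz hw => ?_
    have hφd : DifferentiableOn ℂ (fun z : ℂ => (a * z + b) / (c * z + d))
        (Metric.ball (0 : ℂ) 1) :=
      DifferentiableOn.div (by fun_prop) (by fun_prop) fun z hz => hφden z (by simpa using hz)
    have hσd : DifferentiableOn ℂ (fun z : ℂ => ((starRingEnd ℂ) a * z - (starRingEnd ℂ) c) /
        (-(starRingEnd ℂ) b * z + (starRingEnd ℂ) d)) (Metric.ball (0 : ℂ) 1) :=
      DifferentiableOn.div (by fun_prop) (by fun_prop) fun z hz => hσden z (by simpa using hz)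
    rw [ContinuousLinearMap.comp_apply, ContinuousLinearMap.comp_apply,
      adjoint_composition_szegoKernel e hφd hφ hCφ hw,
      adjoint_multiplication_szegoKernel e hhd hMh hw,
      ← ContinuousLinearMap.adjoint_inner_left, adjoint_multiplication_szegoKernel e hgd hMg hz,
      inner_smul_left, conj_conj, ← ContinuousLinearMap.adjoint_inner_left,
      adjoint_composition_szegoKernel e hσd hσ hCσ hz, inner_smul_right,
      inner_szegoKernel_szegoKernel e hz (hφ w hw), inner_szegoKernel_szegoKernel e (hσ z hz) hw]
    have hz0 := hσden z hz
    have hw0 : (starRingEnd ℂ) (c * w + d) ≠ 0 := (map_ne_zero _).2 (hφden w hw)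
    have hsplit : 1 - z * (starRingEnd ℂ) ((a * w + b) / (c * w + d)) =
        (1 - ((starRingEnd ℂ) a * z - (starRingEnd ℂ) c) /
          (-(starRingEnd ℂ) b * z + (starRingEnd ℂ) d) * (starRingEnd ℂ) w) *
        (-(starRingEnd ℂ) b * z + (starRingEnd ℂ) d) * ((starRingEnd ℂ) (c * w + d))⁻¹ := by
      rw [sub_mul, one_mul, div_mul_eq_mul_div, div_mul_cancel₀ _ hz0, ← div_eq_mul_inv,
        eq_div_iff hw0, sub_mul, map_div₀, one_mul, mul_assoc, div_mul_cancel₀ _ hw0]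
      simp only [map_add, map_mul]
      ring
    rw [hsplit, mul_inv, mul_inv, inv_inv]
    ring
end

section
/- Let ψ ∈ L^∞(𝕋) be the function ψ(z) = z + conj(z) (so ψ̂(1) = ψ̂(−1) = 1 and all other Fourier coefficients vanish), and let φ(z) = iz. Then the Toeplitz composition operator T_ψC_φ on H² is complex symmetric with respect to the conjugation C_{ξ,π/2} for every ξ ∈ ℝ. -/
open Complex MeasureTheory
open scoped ComplexInnerProductSpace

/-- The Fourier coefficients of an even function are even in the index. -/
theorem fourierCoeff_neg_of_even {t : ℝ} [Fact (0 < t)] {ψ : AddCircle t → ℂ}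
    (hψ : ∀ x, ψ (-x) = ψ x) (n : ℤ) : fourierCoeff ψ (-n) = fourierCoeff ψ n := by
  unfold fourierCoeff
  rw [← integral_neg_eq_self]
  refine integral_congr_ae (Filter.Eventually.of_forall fun x => ?_)
  simp only [hψ, fourier_apply, smul_neg, neg_smul, neg_neg]

/-- An antilinear isometry reverses inner products. -/
theorem LinearIsometry.inner_map_map_of_conj {H : Type*} [NormedAddCommGroup H]
    [InnerProductSpace ℂ H] (C : H →ₛₗᵢ[starRingEnd ℂ] H) (x y : H) :
    ⟪C x, C y⟫ = ⟪y, x⟫ := by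
  have hI : Complex.I • C y = -C (Complex.I • y) := by
    rw [C.map_smulₛₗ, Complex.conj_I, neg_smul, neg_neg]
  rw [← inner_conj_symm y x, inner_eq_sum_norm_sq_div_four (C x) (C y),
    inner_eq_sum_norm_sq_div_four x y]
  simp only [RCLike.I_to_complex, hI, sub_neg_eq_add, ← sub_eq_add_neg, ← map_add, ← map_sub,
    C.norm_map]
  simp only [map_div₀, map_add, map_sub, map_mul, map_pow, Complex.conj_I, map_ofNat,
    RCLike.ofReal_eq_complex_ofReal, Complex.conj_ofReal]
  ring

/-- Matrix coefficients of an antilinear isometry that is diagonal at `u`. -/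
theorem LinearIsometry.inner_map_of_conj_of_map_eq_smul {H : Type*} [NormedAddCommGroup H]
    [InnerProductSpace ℂ H] (C : H →ₛₗᵢ[starRingEnd ℂ] H) {u : H} {c : ℂ} (hc : ‖c‖ = 1)
    (hu : C u = c • u) (x : H) : ⟪u, C x⟫ = c * ⟪x, u⟫ := by
  rw [← C.inner_map_map_of_conj u x, hu, inner_smul_left, ← mul_assoc, Complex.mul_conj,
    Complex.normSq_eq_norm_sq, hc]
  simp

/-- Let `ψ(z) = z + conj z` on the unit circle (so `ψ̂(1) = ψ̂(-1) = 1`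
and all other Fourier coefficients vanish) and let `φ(z) = iz`.  The Hardy space `H²` is
modelled as a Hilbert space `H` with Hilbert basis `e k ↔ z^k`, and `T = T_ψ C_φ` is
characterized by its matrix entries `⟪z^p, T z^k⟫ = ψ̂(p-k) iᵏ`.  Then for every `ξ ∈ ℝ`,
`T` is complex symmetric (`T = C T* C`) with respect to the conjugation `C_{ξ,π/2}`,
i.e. the antilinear isometry `C` with `C(z^k) = e^{iξ} e^{-ikπ/2} z^k`. -/
theorem stmt_15 [Fact (0 < 2 * Real.pi)]
    (ψ : AddCircle (2 * Real.pi) → ℂ)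
    (hψ : ψ = fun x => fourier 1 x + (starRingEnd ℂ) (fourier 1 x))
    (H : Type) [NormedAddCommGroup H] [InnerProductSpace ℂ H] [CompleteSpace H]
    (e : HilbertBasis ℕ ℂ H)
    (T : H →L[ℂ] H)
    (hT : ∀ k p : ℕ, ⟪(e p : H), T (e k)⟫ =
      fourierCoeff ψ ((p : ℤ) - k) * Complex.I ^ k) :
    ∀ (ξ : ℝ) (C : H → H),
      (∀ x y : H, C (x + y) = C x + C y) →
      (∀ (α : ℂ) (x : H), C (α • x) = (starRingEnd ℂ) α • C x) →
      (∀ x : H, ‖C x‖ = ‖x‖) →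
      (∀ k : ℕ, C (e k) =
        (Complex.exp (ξ * Complex.I) *
          Complex.exp (-(Real.pi / 2) * Complex.I) ^ k) • (e k : H)) →
      ∀ f : H, T f = C (ContinuousLinearMap.adjoint T (C f)) := by
  intro ξ C hadd hsmul hnorm hCe f
  have hψ_even : ∀ x, ψ (-x) = ψ x := fun x => by
    subst hψ
    simp only [fourier_apply, one_smul, AddCircle.toCircle_neg, Circle.coe_inv_eq_conj,
      Complex.conj_conj, add_comm]
  let D : H →ₛₗᵢ[starRingEnd ℂ] H :=
    { toFun := C, map_add' := hadd, map_smul' := hsmul, norm_map' := hnorm }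
  have hexp : Complex.exp (-(Real.pi / 2) * Complex.I) = -Complex.I := by
    rw [neg_mul, Complex.exp_neg, Complex.exp_pi_div_two_mul_I, Complex.inv_I]
  simp only [hexp] at hCe
  have hunit : ∀ k : ℕ, ‖Complex.exp (ξ * Complex.I) * (-Complex.I) ^ k‖ = 1 := fun k => by
    simp [Complex.norm_exp_ofReal_mul_I]
  let D' : H →SL[starRingEnd ℂ] H := D.toContinuousLinearMap
  let S : H →L[ℂ] H := D'.comp ((ContinuousLinearMap.adjoint T).comp D')
  suffices h : T = S from congrArg (fun A : H →L[ℂ] H => A f) h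
  refine ContinuousLinearMap.ext_on
    (Submodule.dense_iff_topologicalClosure_eq_top.mpr e.dense_span) ?_
  rintro _ ⟨k, rfl⟩
  refine e.repr.injective (lp.ext (funext fun p => ?_))
  rw [e.repr_apply_apply, e.repr_apply_apply, hT]
  change _ = ⟪e p, D (ContinuousLinearMap.adjoint T (C (e k)))⟫
  rw [D.inner_map_of_conj_of_map_eq_smul (hunit p) (hCe p),
    ContinuousLinearMap.adjoint_inner_left, hCe, inner_smul_left, hT,
    ← fourierCoeff_neg_of_even hψ_even, neg_sub]
  have hξ : Complex.exp (ξ * Complex.I) * (starRingEnd ℂ) (Complex.exp (ξ * Complex.I)) = 1 := by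
    rw [Complex.mul_conj, Complex.normSq_eq_norm_sq, Complex.norm_exp_ofReal_mul_I]
    simp
  have hp : (-Complex.I) ^ p * Complex.I ^ p = 1 := by
    rw [← mul_pow]
    simp
  rw [map_mul, map_pow, map_neg, Complex.conj_I, neg_neg]
  linear_combination (-(fourierCoeff ψ ((k : ℤ) - p) * Complex.I ^ k)) *
    ((-Complex.I) ^ p * Complex.I ^ p * hξ + hp)
end

section
/- Let ψ ∈ L^∞(𝕋) be the function ψ(z) = z + conj(z) and let φ(z) = iz. Then the Toeplitz composition operator T = T_ψC_φ on H² satisfies (T T*)(z) = z³ + 2z and (T* T)(z) = −z³ + 2z (as functions of z ∈ 𝔻); in particular, T is not a normal operator, even though Σ_{n=0}^{∞} { |ψ̂(n)|² − Σ_{m=0}^{∞} ( C(m+n, m) · |ψ̂(−n)| · |a|ⁿ · |b|^m )² } = 0 holds for the coefficients a = i, b = 0 of φ. -/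
open Complex MeasureTheory
open scoped ComplexInnerProductSpace

theorem fourierCoeff_fourier_one_add_conj {L : ℝ} [Fact (0 < L)] (n : ℤ) :
    fourierCoeff (fun x : AddCircle L => fourier 1 x + (starRingEnd ℂ) (fourier 1 x)) n =
      if n = 1 ∨ n = -1 then 1 else 0 := by
  have hsum : (fun x : AddCircle L => fourier 1 x + (starRingEnd ℂ) (fourier 1 x)) =
      (fourier 1 : AddCircle L → ℂ) + (fourier (-1) : AddCircle L → ℂ) := by
    funext x
    simp only [Pi.add_apply, fourier_neg]
  have h_integrable (m : ℤ) : Integrable (fourier m : AddCircle L → ℂ) AddCircle.haarAddCircle :=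
    (map_continuous (fourier m)).integrable_of_hasCompactSupport
      (HasCompactSupport.of_compactSpace _)
  rw [hsum, fourierCoeff.add (h_integrable 1) (h_integrable (-1))]
  simp only [Pi.add_apply, fourierCoeff_fourier, Pi.single_apply]
  grind

theorem HilbertBasis.ext_inner {ι 𝕜 E : Type*} [RCLike 𝕜] [NormedAddCommGroup E]
    [InnerProductSpace 𝕜 E] (b : HilbertBasis ι 𝕜 E) {x y : E}
    (h : ∀ i, inner 𝕜 (b i) x = inner 𝕜 (b i) y) : x = y := by
  refine b.repr.injective (lp.ext (funext fun i => ?_))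
  simpa only [b.repr_apply_apply] using h i

/-- Let `ψ(z) = z + conj z` on the unit circle (so `ψ̂(1) = ψ̂(-1) = 1`
and all other Fourier coefficients vanish) and let `φ(z) = iz = az + b` with `a = i`,
`b = 0`.  The Hardy space `H²` is modelled as a Hilbert space `H` with Hilbert basis
`e k ↔ z^k`, and `T = T_ψ C_φ` is characterized by its matrix entries
`⟪z^p, T z^k⟫ = ψ̂(p-k) iᵏ`.  Then `(T T*)(z) = z³ + 2z` and `(T* T)(z) = -z³ + 2z`;
in particular `T` is not normal, even though
`∑_{n≥0} ( |ψ̂(n)|² - ∑_{m≥0} ( C(m+n,m) |ψ̂(-n)| |a|ⁿ |b|^m )² ) = 0`. -/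
theorem stmt_16 [Fact (0 < 2 * Real.pi)]
    (ψ : AddCircle (2 * Real.pi) → ℂ)
    (hψ : ψ = fun x => fourier 1 x + (starRingEnd ℂ) (fourier 1 x))
    (H : Type) [NormedAddCommGroup H] [InnerProductSpace ℂ H] [CompleteSpace H]
    (e : HilbertBasis ℕ ℂ H)
    (T : H →L[ℂ] H)
    (hT : ∀ k p : ℕ, ⟪(e p : H), T (e k)⟫ =
      fourierCoeff ψ ((p : ℤ) - k) * Complex.I ^ k) :
    T (ContinuousLinearMap.adjoint T (e 1)) = (e 3 : H) + (2 : ℂ) • (e 1 : H) ∧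
    ContinuousLinearMap.adjoint T (T (e 1)) = -(e 3 : H) + (2 : ℂ) • (e 1 : H) ∧
    ¬ (ContinuousLinearMap.adjoint T ∘L T = T ∘L ContinuousLinearMap.adjoint T) ∧
    (∑' n : ℕ, (‖fourierCoeff ψ (n : ℤ)‖ ^ 2 -
      ∑' m : ℕ, ((Nat.choose (m + n) m : ℝ) * ‖fourierCoeff ψ (-(n : ℤ))‖ *
        ‖Complex.I‖ ^ n * ‖(0 : ℂ)‖ ^ m) ^ 2)) = 0 := by
  have hψc (n : ℤ) : fourierCoeff ψ n = if n = 1 ∨ n = -1 then 1 else 0 := by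
    rw [hψ, fourierCoeff_fourier_one_add_conj]
  have he (i j : ℕ) : ⟪(e i : H), e j⟫ = if i = j then 1 else 0 :=
    orthonormal_iff_ite.mp e.orthonormal i j
  have hT_zero : T (e 0) = e 1 := e.ext_inner fun p => by
    rw [hT, hψc, he]
    simp only [pow_zero, mul_one]
    grind
  have hT_succ (k : ℕ) : T (e (k + 1)) = I ^ (k + 1) • ((e k : H) + e (k + 2)) :=
    e.ext_inner fun p => by
      rw [hT, hψc, inner_smul_right, inner_add_right, he, he, mul_comm]
      grind
  have hA (k p : ℕ) : ⟪(e k : H), ContinuousLinearMap.adjoint T (e p)⟫ =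
      if (p : ℤ) - k = 1 ∨ (p : ℤ) - k = -1 then (-I) ^ k else 0 := by
    rw [ContinuousLinearMap.adjoint_inner_right, ← inner_conj_symm, hT, hψc]
    split_ifs <;> simp
  have hA_zero : ContinuousLinearMap.adjoint T (e 0) = (-I) • (e 1 : H) :=
    e.ext_inner fun k => by
      rw [hA, inner_smul_right, he]
      obtain rfl | hk := eq_or_ne k 1
      · simp
      · grind
  have hA_succ (p : ℕ) : ContinuousLinearMap.adjoint T (e (p + 1)) =
      (-I) ^ p • (e p : H) + (-I) ^ (p + 2) • (e (p + 2) : H) :=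
    e.ext_inner fun k => by
      rw [hA, inner_add_right, inner_smul_right, inner_smul_right, he, he]
      grind
  have hTA : T (ContinuousLinearMap.adjoint T (e 1)) = (e 3 : H) + (2 : ℂ) • (e 1 : H) := by
    rw [hA_succ 0, map_add, map_smul, map_smul, hT_zero, hT_succ 1]
    simp only [zero_add, Nat.reduceAdd, pow_zero, one_smul, neg_sq, I_sq, smul_smul]
    module
  have hAT : ContinuousLinearMap.adjoint T (T (e 1)) = -(e 3 : H) + (2 : ℂ) • (e 1 : H) := by
    rw [hT_succ 0, map_smul, map_add, hA_zero, hA_succ 1]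
    simp only [zero_add, Nat.reduceAdd, pow_one, smul_add, smul_smul]
    have h₁ : I * -I = 1 := by simp
    have h₃ : I * (-I) ^ 3 = -1 := by rw [Odd.neg_pow (by decide), I_pow_three]; simp
    rw [h₁, h₃]
    module
  refine ⟨hTA, hAT, fun hnormal => ?_, ?_⟩
  · have h : -(e 3 : H) + (2 : ℂ) • (e 1 : H) = (e 3 : H) + (2 : ℂ) • (e 1 : H) := by
      rw [← hAT, ← hTA]
      exact DFunLike.congr_fun hnormal (e 1)
    have h₃ := congrArg (fun x : H => ⟪(e 3 : H), x⟫) (add_right_cancel h)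
    simp only [inner_neg_right, he, if_true] at h₃
    norm_num at h₃
  · have hsymm (n : ℤ) : fourierCoeff ψ (-n) = fourierCoeff ψ n := by
      rw [hψc, hψc]
      grind
    refine (tsum_congr fun n => ?_).trans tsum_zero
    rw [tsum_eq_single 0 fun m hm => by simp [hm], hsymm]
    simp
end
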